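/- Let a > 0 and 0 < α < √a. Define the linear functional 𝔖^{(α)} : ℝ[X] → ℝ by 𝔖^{(α)}(f) = 𝔖((X − α)·f), and define Φ_{2j}^{(α)}(X) = P_j(X²) and Φ_{2j+1}^{(α)}(X) = (X + α)·P̃_j^{(α)}(X²). Then each Φ_n^{(α)} is monic of degree n, 𝔖^{(α)}(Φ_m^{(α)}·Φ_n^{(α)}) = 0 whenever m ≠ n, and 𝔖^{(α)}((Φ_n^{(α)})²) > 0 for every n ≥ 0. (This is the Chihara construction realized as a shifted extended Darboux transformation, whose associated function is (λ − α)·S(λ²).) -/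

import Mathlib

open Polynomial MeasureTheory

/-!
Let `L f = S (X · f(X²))`, so that the `P_j` are the monic orthogonal polynomials of `L`, and let
`L_c f = L ((X - c) f)`. As `S` kills `f(X²)`, the functional `S^{(α)} f = S ((X - α) f)` takes
on `f(X²)`, `(X + α) f(X²)` and `(X + α)² f(X²)` the values `L f`, `0` and `L_{α²} f`; the last
one because `(X - α) (X + α)² = (X² - α²) (X + α)`. Orthogonality of the `Φ_n` therefore splits
into orthogonality of the `P_j` for `L` and of the kernel polynomials `P̃_j` for `L_{α²}`.
The latter holds since `(X - α²) P̃_j = P_{j+1} - r_j P_j` with `r_j = P_{j+1}(α²) / P_j(α²)`,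
and it also gives `L_{α²} (P̃_j²) = -r_j L (P_j²)`, where `r_j < 0` by the alternation of the signs
of `P_j(α²)`. Finally `L (P_j²) = D_j / D_{j-1} > 0`, as a unitriangular change of basis turns the
Hankel matrix into the diagonal Gram matrix of the `P_j`.
-/

section OrthogonalPolynomials

variable {R : Type*} [CommRing R]

/-- `P` is the sequence of monic orthogonal polynomials of the moment functional `L`. Orthogonality
is tested against powers of `X`; see `IsMonicOrthogonal.apply_mul_eq_zero` for the pairwise form. -/
structure IsMonicOrthogonal (L : R[X] →ₗ[R] R) (P : ℕ → R[X]) : Prop where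
  isMonicOfDegree : ∀ n, IsMonicOfDegree (P n) n
  apply_mul_X_pow : ∀ n, ∀ k < n, L (P n * X ^ k) = 0

/-- The `n × n` Hankel matrix of the moments `L (X ^ j)`, so that its determinant is
`D_{n-1}`. -/
noncomputable def hankelMatrix (L : R[X] →ₗ[R] R) (n : ℕ) : Matrix (Fin n) (Fin n) R :=
  Matrix.of fun i k => L (X ^ (i.1 + k.1))

theorem det_apply_mul_eq_det_hankelMatrix (L : R[X] →ₗ[R] R) {n : ℕ} (p : Fin n → R[X])
    (hp : ∀ i, IsMonicOfDegree (p i) i) :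
    (Matrix.of fun i j => L (p i * p j)).det = (hankelMatrix L n).det := by
  let A : Matrix (Fin n) (Fin n) R := Matrix.of fun k i => (p i).coeff k
  have hA : A.det = 1 :=
    Matrix.det_matrixOfPolynomials p (fun i => (hp i).natDegree_eq) fun i => (hp i).monic
  have p_eq_sum (i : Fin n) : p i = ∑ k : Fin n, A k i • X ^ k.1 := by
    have hdeg : (p i).natDegree < n := (hp i).natDegree_eq.trans_lt i.2
    conv_lhs => rw [(p i).as_sum_range_C_mul_X_pow' hdeg, Finset.sum_range]
    simp only [A, Matrix.of_apply, smul_eq_C_mul]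
  have gram_eq : (Matrix.of fun i j => L (p i * p j)) = A.transpose * hankelMatrix L n * A := by
    ext i j
    rw [Matrix.of_apply, p_eq_sum i, p_eq_sum j, Finset.sum_mul_sum, Finset.sum_comm]
    simp only [hankelMatrix, Matrix.mul_apply, Matrix.transpose_apply, Matrix.of_apply,
      Finset.sum_mul, map_sum, smul_mul_smul_comm, map_smul, ← pow_add, smul_eq_mul, mul_right_comm]
  rw [gram_eq, Matrix.det_mul, Matrix.det_mul, Matrix.det_transpose, hA, one_mul, mul_one]

namespace IsMonicOrthogonal

variable {L : R[X] →ₗ[R] R} {P : ℕ → R[X]}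

theorem nontrivial (hP : IsMonicOrthogonal L P) : Nontrivial R := by
  by_contra hR
  have := not_nontrivial_iff_subsingleton.mp hR
  exact one_ne_zero (isMonicOfDegree_iff_of_subsingleton.mp (hP.isMonicOfDegree 1))

theorem apply_mul_eq_zero_of_degree_lt (hP : IsMonicOrthogonal L P) {n : ℕ} {q : R[X]}
    (hq : q.degree < n) : L (P n * q) = 0 := by
  classical
  have degreeLT_le : degreeLT R n ≤ LinearMap.ker (L ∘ₗ LinearMap.mulLeft R (P n)) := by
    rw [degreeLT_eq_span_X_pow, Submodule.span_le]
    intro f hf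
    obtain ⟨k, hk, rfl⟩ := Finset.mem_image.mp hf
    exact hP.apply_mul_X_pow n k (Finset.mem_range.mp hk)
  exact degreeLT_le (mem_degreeLT.mpr hq)

theorem apply_mul_eq_zero (hP : IsMonicOrthogonal L P) {m n : ℕ} (hmn : m ≠ n) :
    L (P m * P n) = 0 := by
  wlog hlt : n < m generalizing m n
  · rw [mul_comm]
    exact this hmn.symm (by lia)
  refine hP.apply_mul_eq_zero_of_degree_lt (degree_le_natDegree.trans_lt ?_)
  rw [(hP.isMonicOfDegree n).natDegree_eq]
  exact_mod_cast hlt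

theorem apply_mul_eq_apply_mul_self (hP : IsMonicOrthogonal L P) {n : ℕ} {q : R[X]}
    (hq : IsMonicOfDegree q n) : L (P n * q) = L (P n * P n) := by
  have hdeg : (q - P n).degree < n := by
    rw [degree_lt_iff_coeff_zero]
    intro m hm
    rw [coeff_sub, hq.coeff_eq (hP.isMonicOfDegree n) hm, sub_self]
  rw [← sub_eq_zero, ← map_sub, ← mul_sub]
  exact hP.apply_mul_eq_zero_of_degree_lt hdeg

theorem det_hankelMatrix (hP : IsMonicOrthogonal L P) (n : ℕ) :
    (hankelMatrix L n).det = ∏ i : Fin n, L (P i * P i) := by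
  rw [← det_apply_mul_eq_det_hankelMatrix L (fun i => P i) fun i => hP.isMonicOfDegree i,
    ← Matrix.det_diagonal]
  congr 1
  ext i j
  by_cases hij : i = j
  · rw [Matrix.of_apply, hij, Matrix.diagonal_apply_eq]
  · rw [Matrix.of_apply, Matrix.diagonal_apply_ne _ hij,
      hP.apply_mul_eq_zero (Fin.val_injective.ne hij)]

theorem apply_mul_self_pos [LinearOrder R] [IsStrictOrderedRing R] (hP : IsMonicOrthogonal L P)
    (hD : ∀ n, 0 < (hankelMatrix L n).det) (n : ℕ) : 0 < L (P n * P n) := by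
  have hsucc : (hankelMatrix L (n + 1)).det = (hankelMatrix L n).det * L (P n * P n) := by
    simp only [hP.det_hankelMatrix, Fin.prod_univ_castSucc, Fin.val_castSucc, Fin.val_last]
  exact (mul_pos_iff_of_pos_left (hD n)).mp (hsucc ▸ hD (n + 1))

end IsMonicOrthogonal

end OrthogonalPolynomials

section Christoffel

variable {R : Type*} [CommRing R]

/-- The Christoffel transform `f ↦ L ((X - c) f)` of `L`; in particular `𝔖^{(α)}` is
`christoffelTransform 𝔖 α`. -/
noncomputable def christoffelTransform (L : R[X] →ₗ[R] R) (c : R) : R[X] →ₗ[R] R :=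
  L ∘ₗ LinearMap.mulLeft R (X - C c)

theorem christoffelTransform_apply (L : R[X] →ₗ[R] R) (c : R) (f : R[X]) :
    christoffelTransform L c f = L ((X - C c) * f) :=
  rfl

namespace IsMonicOrthogonal

variable {L : R[X] →ₗ[R] R} {P Q : ℕ → R[X]} {c : R} {r : ℕ → R}

theorem christoffelTransform_of_mul_eq (hP : IsMonicOrthogonal L P)
    (hQ : ∀ n, (X - C c) * Q n = P (n + 1) - C (r n) * P n) :
    IsMonicOrthogonal (christoffelTransform L c) Q where
  isMonicOfDegree n := by
    have := hP.nontrivial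
    have hlower : (C (r n) * P n).natDegree < n + 1 :=
      (natDegree_C_mul_le _ _).trans_lt (by rw [(hP.isMonicOfDegree n).natDegree_eq]; lia)
    refine (isMonicOfDegree_X_sub_one c).of_mul_left ?_
    rw [hQ, add_comm 1 n]
    exact (hP.isMonicOfDegree (n + 1)).sub hlower
  apply_mul_X_pow n k hk := by
    rw [christoffelTransform_apply, ← mul_assoc, hQ, sub_mul, map_sub, mul_assoc, ← smul_eq_C_mul,
      map_smul, hP.apply_mul_X_pow (n + 1) k (by lia), hP.apply_mul_X_pow n k hk, smul_zero,
      sub_zero]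

theorem christoffelTransform_apply_mul_self (hP : IsMonicOrthogonal L P)
    (hQ : ∀ n, (X - C c) * Q n = P (n + 1) - C (r n) * P n) (n : ℕ) :
    christoffelTransform L c (Q n * Q n) = -r n * L (P n * P n) := by
  have hQn : IsMonicOfDegree (Q n) n := (hP.christoffelTransform_of_mul_eq hQ).isMonicOfDegree n
  have hdeg : (Q n).degree < (n + 1 : ℕ) := by
    refine degree_le_natDegree.trans_lt ?_
    rw [hQn.natDegree_eq]
    exact_mod_cast n.lt_succ_self
  calc christoffelTransform L c (Q n * Q n)
      = L (P (n + 1) * Q n) - r n * L (P n * Q n) := by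
        rw [christoffelTransform_apply, ← mul_assoc, hQ, sub_mul, map_sub, mul_assoc,
          ← smul_eq_C_mul, map_smul, smul_eq_mul]
    _ = -r n * L (P n * P n) := by
        rw [hP.apply_mul_eq_zero_of_degree_lt hdeg, hP.apply_mul_eq_apply_mul_self hQn]
        ring

end IsMonicOrthogonal

end Christoffel

section Chihara

variable {R : Type*} [CommRing R]

/-- The functional `f ↦ S (X · f(X²))`, whose moments are the odd moments of `S`. -/
noncomputable def oddPart (S : R[X] →ₗ[R] R) : R[X] →ₗ[R] R :=
  S ∘ₗ LinearMap.mulLeft R X ∘ₗ (expand R 2).toLinearMap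

theorem oddPart_apply (S : R[X] →ₗ[R] R) (f : R[X]) : oddPart S f = S (X * expand R 2 f) :=
  rfl

theorem oddPart_X_pow (S : R[X] →ₗ[R] R) (j : ℕ) : oddPart S (X ^ j) = S (X ^ (2 * j + 1)) := by
  rw [oddPart_apply, map_pow, expand_X, ← pow_mul, pow_succ']

variable {S : R[X] →ₗ[R] R}

theorem apply_expand_two_eq_zero (hS : ∀ j, S (X ^ (2 * j)) = 0) (f : R[X]) :
    S (expand R 2 f) = 0 := by
  induction f using Polynomial.induction_on' with
  | add p q hp hq => rw [map_add, map_add, hp, hq, add_zero]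
  | monomial n c =>
    rw [← smul_X_eq_monomial, map_smul, map_smul, map_pow, expand_X, ← pow_mul, hS, smul_zero]

theorem christoffelTransform_expand_two (hS : ∀ j, S (X ^ (2 * j)) = 0)
    (α : R) (f : R[X]) :
    christoffelTransform S α (expand R 2 f) = oddPart S f := by
  rw [christoffelTransform_apply, sub_mul, ← smul_eq_C_mul, map_sub, map_smul,
    apply_expand_two_eq_zero hS, smul_zero, sub_zero, oddPart_apply]

theorem christoffelTransform_X_add_C_mul_expand_two (hS : ∀ j, S (X ^ (2 * j)) = 0)
    (α : R) (f : R[X]) :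
    christoffelTransform S α ((X + C α) * expand R 2 f) = 0 := by
  have factor : (X - C α) * ((X + C α) * expand R 2 f) = expand R 2 ((X - C (α ^ 2)) * f) := by
    rw [map_mul, map_sub, expand_X, expand_C, C_pow]
    ring
  rw [christoffelTransform_apply, factor, apply_expand_two_eq_zero hS]

theorem christoffelTransform_X_add_C_sq_mul_expand_two (hS : ∀ j, S (X ^ (2 * j)) = 0)
    (α : R) (f : R[X]) :
    christoffelTransform S α ((X + C α) ^ 2 * expand R 2 f) =
      christoffelTransform (oddPart S) (α ^ 2) f := by
  have factor : (X - C α) * ((X + C α) ^ 2 * expand R 2 f) =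
      X * expand R 2 ((X - C (α ^ 2)) * f) + α • expand R 2 ((X - C (α ^ 2)) * f) := by
    rw [map_mul, map_sub, expand_X, expand_C, C_pow, smul_eq_C_mul]
    ring
  rw [christoffelTransform_apply, factor, map_add, map_smul, apply_expand_two_eq_zero hS,
    smul_zero, add_zero, christoffelTransform_apply, oddPart_apply]

theorem isMonicOfDegree_expand {p : R[X]} {m n : ℕ} (hm : m ≠ 0) (hp : IsMonicOfDegree p n) :
    IsMonicOfDegree (expand R m p) (n * m) :=
  ⟨by rw [natDegree_expand, hp.natDegree_eq], hp.monic.expand hm.pos⟩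

theorem IsMonicOrthogonal.chihara (hS : ∀ j, S (X ^ (2 * j)) = 0)
    {α : R} {P Q Φ : ℕ → R[X]}
    (hP : IsMonicOrthogonal (oddPart S) P)
    (hQ : IsMonicOrthogonal (christoffelTransform (oddPart S) (α ^ 2)) Q)
    (hΦeven : ∀ j, Φ (2 * j) = expand R 2 (P j))
    (hΦodd : ∀ j, Φ (2 * j + 1) = (X + C α) * expand R 2 (Q j)) :
    IsMonicOrthogonal (christoffelTransform S α) Φ where
  isMonicOfDegree n := by
    have := hP.nontrivial
    obtain ⟨j, rfl | rfl⟩ := n.even_or_odd'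
    · rw [hΦeven, mul_comm]
      exact isMonicOfDegree_expand two_ne_zero (hP.isMonicOfDegree j)
    · rw [hΦodd, add_comm (2 * j), mul_comm 2 j]
      exact (isMonicOfDegree_X_add_one α).mul
        (isMonicOfDegree_expand two_ne_zero (hQ.isMonicOfDegree j))
  apply_mul_X_pow n k hk := by
    have X_pow_even (i : ℕ) : (X : R[X]) ^ (2 * i) = expand R 2 (X ^ i) := by
      rw [map_pow, expand_X, pow_mul]
    have X_pow_odd (i : ℕ) : (X : R[X]) ^ (2 * i + 1) =
        (X + C α) * expand R 2 (X ^ i) - C α * expand R 2 (X ^ i) := by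
      rw [pow_succ', X_pow_even]
      ring
    obtain ⟨j, rfl | rfl⟩ := n.even_or_odd' <;> obtain ⟨i, rfl | rfl⟩ := k.even_or_odd'
    · rw [hΦeven, X_pow_even, ← map_mul, christoffelTransform_expand_two hS,
        hP.apply_mul_X_pow j i (by lia)]
    · have split : expand R 2 (P j) * X ^ (2 * i + 1) =
          (X + C α) * expand R 2 (P j * X ^ i) - α • expand R 2 (P j * X ^ i) := by
        rw [X_pow_odd, map_mul, smul_eq_C_mul]
        ring
      rw [hΦeven, split, map_sub, map_smul, christoffelTransform_X_add_C_mul_expand_two hS,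
        christoffelTransform_expand_two hS, hP.apply_mul_X_pow j i (by lia), smul_zero, sub_zero]
    · rw [hΦodd, X_pow_even, mul_assoc, ← map_mul, christoffelTransform_X_add_C_mul_expand_two hS]
    · have split : (X + C α) * expand R 2 (Q j) * X ^ (2 * i + 1) =
          (X + C α) ^ 2 * expand R 2 (Q j * X ^ i) -
            α • ((X + C α) * expand R 2 (Q j * X ^ i)) := by
        rw [X_pow_odd, map_mul, smul_eq_C_mul]
        ring
      rw [hΦodd, split, map_sub, map_smul, christoffelTransform_X_add_C_sq_mul_expand_two hS,
        christoffelTransform_X_add_C_mul_expand_two hS, hQ.apply_mul_X_pow j i (by lia),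
        smul_zero, sub_zero]

end Chihara

section Moments

variable {μ : Measure ℝ}

theorem integrable_eval_of_integrable_pow
    (hint : ∀ j : ℕ, Integrable (fun t : ℝ => t ^ j) μ) (f : ℝ[X]) :
    Integrable (fun t => f.eval t) μ := by
  simp only [eval_eq_sum_range]
  exact integrable_finsetSum _ fun i _ => (hint i).const_mul _

theorem apply_eq_integral_eval (hint : ∀ j : ℕ, Integrable (fun t : ℝ => t ^ j) μ)
    {L : ℝ[X] →ₗ[ℝ] ℝ} (hL : ∀ j, L (X ^ j) = ∫ t, t ^ j ∂μ)
    (f : ℝ[X]) : L f = ∫ t, f.eval t ∂μ := by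
  induction f using Polynomial.induction_on' with
  | add p q hp hq =>
    simp only [eval_add, map_add, hp, hq]
    exact (integral_add (integrable_eval_of_integrable_pow hint p)
      (integrable_eval_of_integrable_pow hint q)).symm
  | monomial n c =>
    simp only [eval_monomial]
    rw [integral_const_mul, ← hL, ← smul_X_eq_monomial, map_smul, smul_eq_mul]

theorem isMonicOrthogonal_of_integral_eq_zero
    (hint : ∀ j : ℕ, Integrable (fun t : ℝ => t ^ j) μ) {L : ℝ[X] →ₗ[ℝ] ℝ}
    (hL : ∀ j, L (X ^ j) = ∫ t, t ^ j ∂μ) {P : ℕ → ℝ[X]} (hP : ∀ n, IsMonicOfDegree (P n) n)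
    (horth : ∀ j k : ℕ, k < j → ∫ t, (P j).eval t * t ^ k ∂μ = 0) : IsMonicOrthogonal L P where
  isMonicOfDegree := hP
  apply_mul_X_pow j k hk := by
    simp only [apply_eq_integral_eval hint hL, eval_mul, eval_pow, eval_X, horth j k hk]

end Moments

theorem div_neg_of_alternating {K : Type*} [Field K] [LinearOrder K] [IsStrictOrderedRing K]
    {x : ℕ → K} (hx : ∀ j, 0 < (-1) ^ j * x j) (j : ℕ) : x (j + 1) / x j < 0 := by
  have hquot : 0 < ((-1) ^ (j + 1) * x (j + 1)) / ((-1) ^ j * x j) := div_pos (hx (j + 1)) (hx j)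
  have hsign : (-1 : K) ^ j ≠ 0 := pow_ne_zero j (neg_ne_zero.mpr one_ne_zero)
  rwa [pow_succ', mul_assoc, neg_one_mul, neg_div, mul_div_mul_left _ _ hsign, neg_pos] at hquot

theorem stmt_15_general {K : Type*} [Field K] [LinearOrder K] [IsStrictOrderedRing K]
    (S : K[X] →ₗ[K] K) (hSeven : ∀ j, S (X ^ (2 * j)) = 0)
    (hDpos : ∀ n, 0 < (hankelMatrix (oddPart S) n).det)
    (P : ℕ → K[X]) (hP : IsMonicOrthogonal (oddPart S) P)
    (α : K) (hP0 : ∀ j, 0 < (-1) ^ j * (P j).eval (α ^ 2))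
    (Ptα : ℕ → K[X])
    (hPtα : ∀ j, (X - C (α ^ 2)) * Ptα j =
      P (j + 1) - C ((P (j + 1)).eval (α ^ 2) / (P j).eval (α ^ 2)) * P j)
    (Φ : ℕ → K[X])
    (hΦeven : ∀ j, Φ (2 * j) = (P j).comp (X ^ 2))
    (hΦodd : ∀ j, Φ (2 * j + 1) = (X + C α) * (Ptα j).comp (X ^ 2)) :
    (∀ n, (Φ n).Monic ∧ (Φ n).natDegree = n) ∧
    (∀ m n, m ≠ n → S ((X - C α) * (Φ m * Φ n)) = 0) ∧
    (∀ n, 0 < S ((X - C α) * (Φ n * Φ n))) := by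
  have hPt : IsMonicOrthogonal (christoffelTransform (oddPart S) (α ^ 2)) Ptα :=
    hP.christoffelTransform_of_mul_eq hPtα
  have hΦ : IsMonicOrthogonal (christoffelTransform S α) Φ := hP.chihara hSeven hPt hΦeven hΦodd
  have hPpos : ∀ j, 0 < oddPart S (P j * P j) := hP.apply_mul_self_pos hDpos
  refine ⟨fun n => ⟨(hΦ.isMonicOfDegree n).monic, (hΦ.isMonicOfDegree n).natDegree_eq⟩,
    fun m n hmn => hΦ.apply_mul_eq_zero hmn, fun n => ?_⟩
  rw [← christoffelTransform_apply]
  obtain ⟨j, rfl | rfl⟩ := n.even_or_odd'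
  · rw [hΦeven, ← expand_eq_comp_X_pow, ← map_mul, christoffelTransform_expand_two hSeven]
    exact hPpos j
  · rw [hΦodd, ← expand_eq_comp_X_pow, mul_mul_mul_comm, ← sq, ← map_mul,
      christoffelTransform_X_add_C_sq_mul_expand_two hSeven,
      hP.christoffelTransform_apply_mul_self hPtα]
    exact mul_pos (neg_pos.mpr (div_neg_of_alternating hP0 j)) (hPpos j)

/-- Chihara construction as a shifted extended Darboux
transformation: with `𝔖^{(α)}(f) = 𝔖((X - α)·f)`, `Φ^{(α)}_{2j} = P_j(X²)` and
`Φ^{(α)}_{2j+1} = (X + α)·P̃_j^{(α)}(X²)`, each `Φ^{(α)}_n` is monic of degree `n`,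
`𝔖^{(α)}(Φ_m·Φ_n) = 0` for `m ≠ n` and `𝔖^{(α)}(Φ_n²) > 0` for every `n`. -/
theorem stmt_15
    (a : ℝ) (ha : 0 < a)
    (μ : Measure ℝ) [IsProbabilityMeasure μ]
    (hsupp : ∀ᵐ t ∂μ, a ≤ t)
    (hint : ∀ j : ℕ, Integrable (fun t : ℝ => t ^ j) μ)
    (s : ℕ → ℝ) (hs : ∀ j, s j = ∫ t, t ^ j ∂μ)
    (hDpos : ∀ n : ℕ, 0 < (Matrix.of fun i k : Fin (n + 1) => s (i.1 + k.1)).det)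
    (P : ℕ → Polynomial ℝ)
    (hPmonic : ∀ j, (P j).Monic) (hPdeg : ∀ j, (P j).natDegree = j)
    (hPorth : ∀ j k : ℕ, k < j → ∫ t, (P j).eval t * t ^ k ∂μ = 0)
    (S : Polynomial ℝ →ₗ[ℝ] ℝ)
    (hSeven : ∀ j : ℕ, S (X ^ (2 * j)) = 0)
    (hSodd : ∀ j : ℕ, S (X ^ (2 * j + 1)) = s j)
    (α : ℝ) (hα0 : 0 < α) (hαa : α < Real.sqrt a)
    (hP0 : ∀ j : ℕ, 0 < (-1 : ℝ) ^ j * (P j).eval (α ^ 2))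
    (Ptα : ℕ → Polynomial ℝ)
    (hPtα : ∀ j, (X - C (α ^ 2)) * Ptα j =
      P (j + 1) - C ((P (j + 1)).eval (α ^ 2) / (P j).eval (α ^ 2)) * P j)
    (Φ : ℕ → Polynomial ℝ)
    (hΦeven : ∀ j, Φ (2 * j) = (P j).comp (X ^ 2))
    (hΦodd : ∀ j, Φ (2 * j + 1) = (X + C α) * (Ptα j).comp (X ^ 2)) :
    (∀ n : ℕ, (Φ n).Monic ∧ (Φ n).natDegree = n) ∧
    (∀ m n : ℕ, m ≠ n → S ((X - C α) * (Φ m * Φ n)) = 0) ∧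
    (∀ n : ℕ, 0 < S ((X - C α) * (Φ n * Φ n))) := by
  have hL (j : ℕ) : oddPart S (X ^ j) = s j := (oddPart_X_pow S j).trans (hSodd j)
  have hD : ∀ n, 0 < (hankelMatrix (oddPart S) n).det
    | 0 => by simp
    | n + 1 => by simpa only [hankelMatrix, hL] using hDpos n
  have hP : IsMonicOrthogonal (oddPart S) P :=
    isMonicOrthogonal_of_integral_eq_zero hint (fun j => (hL j).trans (hs j))
      (fun j => ⟨hPdeg j, hPmonic j⟩) hPorth
  exact stmt_15_general S hSeven hD P hP α hP0 Ptα hPtα Φ hΦeven hΦodd
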